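/- Let r > 0 be a real number, q ∈ (0,1) and Θ ∈ (0,1). For every natural number x, the transition probabilities p_Θ(x, z) = ∑_{y=0}^{min(x,z)} Γ(z+r)/((z-y)! Γ(y+r)) · [q(1-Θ)]^{z-y} · [1-q(1-Θ)]^{r+y} · C(x,y) Θ^y (1-Θ)^{x-y} satisfy ∑_{z=0}^{∞} p_Θ(x, z) = 1; that is, p_Θ defines a valid Markov transition kernel on the non-negative integers. -/

import Mathlib

/-- Transition kernel p_Θ(x, z) = ∑_{y=0}^{min(x,z)}
    Γ(z+r)/((z-y)! Γ(y+r)) · [q(1-Θ)]^{z-y} · [1-q(1-Θ)]^{r+y} · C(x,y) Θ^y (1-Θ)^{x-y}. -/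
noncomputable def pKer (r q Θ : ℝ) (x z : ℕ) : ℝ :=
  ∑ y ∈ Finset.range (min x z + 1),
    Real.Gamma ((z : ℝ) + r) / (((z - y).factorial : ℝ) * Real.Gamma ((y : ℝ) + r)) *
      (q * (1 - Θ)) ^ (z - y) * (1 - q * (1 - Θ)) ^ (r + (y : ℝ)) *
      (x.choose y : ℝ) * Θ ^ y * (1 - Θ) ^ (x - y)

/-!
The kernel is a mixture: `p_Θ(x, ·)` averages, with binomial weights in `y`, the negative binomial
law `NB(r + y, q(1 - Θ))` translated by `y`. Each translated law has mass one by Newton's binomial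
series for `(1 - p) ^ (-s)`, whose coefficients are quotients of Gamma values, and the binomial
weights sum to one.
-/

open Finset

theorem gamma_add_nat_div_gamma_eq {s : ℝ} (hs : ∀ m : ℕ, s ≠ -m) (n : ℕ) :
    Real.Gamma (s + n) / Real.Gamma s = (ascPochhammer ℝ n).eval s := by
  have hcast : (((ascPochhammer ℝ n).eval s : ℝ) : ℂ) = (ascPochhammer ℂ n).eval (s : ℂ) := by
    rw [ascPochhammer_eval₂ Complex.ofRealHom]
    exact (Polynomial.eval₂_at_apply Complex.ofRealHom s).symm
  rw [← Complex.ofReal_inj, hcast, ← Complex.Gamma_add_nat_div_Gamma_eq _ (mod_cast hs)]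
  simp only [Complex.ofReal_div, ← Complex.Gamma_ofReal, Complex.ofReal_add, Complex.ofReal_natCast]

theorem multichoose_eq_gamma_div {s : ℝ} (hs : ∀ m : ℕ, s ≠ -m) (n : ℕ) :
    Ring.multichoose s n = Real.Gamma (s + n) / (n.factorial * Real.Gamma s) := by
  have hfact : n.factorial * Ring.multichoose s n = (ascPochhammer ℝ n).eval s := by
    rw [← nsmul_eq_mul, Ring.factorial_nsmul_multichoose_eq_ascPochhammer,
      Polynomial.ascPochhammer_smeval_eq_eval]
  rw [mul_comm, ← div_div, gamma_add_nat_div_gamma_eq hs, ← hfact,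
    mul_div_cancel_left₀ _ (by positivity)]

theorem hasSum_multichoose_mul_pow (s : ℝ) {p : ℝ} (hp : |p| < 1) :
    HasSum (fun n : ℕ => Ring.multichoose s n * p ^ n) (1 / (1 - p) ^ s) := by
  have hball : p ∈ Metric.eball (0 : ℝ) 1 := by
    simpa [enorm_eq_nnnorm, ← NNReal.coe_lt_one] using hp
  have hcoeff (n : ℕ) : Ring.choose (s + n - 1) n = Ring.multichoose s n := by
    rw [Ring.choose, sub_sub, sub_add, add_sub_cancel_left, add_sub_cancel_right]
  simpa [hcoeff, mul_comm] using
    (Real.one_div_one_sub_rpow_hasFPowerSeriesOnBall_zero s).hasSum hball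

/-- The mass at `n` of the negative binomial law `NB(s, p)`, with `p` the weight of each of the `n`
counted trials, so that `1 - p` carries the real exponent `s`. -/
noncomputable def negBinomialMass (s p : ℝ) (n : ℕ) : ℝ :=
  Real.Gamma (s + n) / (n.factorial * Real.Gamma s) * p ^ n * (1 - p) ^ s

theorem hasSum_negBinomialMass {s p : ℝ} (hs : ∀ m : ℕ, s ≠ -m) (hp : |p| < 1) :
    HasSum (negBinomialMass s p) 1 := by
  have hpos : 0 < (1 - p) ^ s := Real.rpow_pos_of_pos (sub_pos.2 (abs_lt.1 hp).2) s
  have hsum := (hasSum_multichoose_mul_pow s hp).mul_right ((1 - p) ^ s)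
  rw [one_div_mul_cancel hpos.ne'] at hsum
  simp only [multichoose_eq_gamma_div hs] at hsum
  exact hsum

theorem hasSum_ite_le_sub_iff {M : Type*} [AddCommMonoid M] [TopologicalSpace M]
    {f : ℕ → M} {a : M} (k : ℕ) :
    HasSum (fun n => if k ≤ n then f (n - k) else 0) a ↔ HasSum f a := by
  rw [← (add_left_injective k).hasSum_iff]
  · simp [Function.comp_def]
  · intro n hn
    exact if_neg fun hkn => hn ⟨n - k, Nat.sub_add_cancel hkn⟩

theorem pKer_eq_sum_bernstein_mul_negBinomialMass (r q Θ : ℝ) (x z : ℕ) :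
    pKer r q Θ x z = ∑ y ∈ range (x + 1), (bernsteinPolynomial ℝ x y).eval Θ *
      if y ≤ z then negBinomialMass (r + y) (q * (1 - Θ)) (z - y) else 0 := by
  have hrange : range (min x z + 1) = {y ∈ range (x + 1) | y ≤ z} := by
    ext y
    simp only [mem_range, mem_filter]
    omega
  simp only [mul_ite, mul_zero]
  rw [pKer, hrange, ← sum_filter]
  refine sum_congr rfl fun y hy => ?_
  have hshift : r + y + ((z - y : ℕ) : ℝ) = z + r := by
    rw [Nat.cast_sub (mem_filter.1 hy).2]
    ring
  rw [negBinomialMass, hshift]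
  simp only [bernsteinPolynomial, Polynomial.eval_mul,
    Polynomial.eval_pow, Polynomial.eval_sub, Polynomial.eval_one, Polynomial.eval_X,
    Polynomial.eval_natCast, add_comm r]
  ring

theorem pKer_hasSum_one_general {r q Θ : ℝ} (hr : ∀ m : ℕ, r ≠ -m) (hp : |q * (1 - Θ)| < 1)
    (x : ℕ) : HasSum (pKer r q Θ x) 1 := by
  have hshape (y : ℕ) : ∀ m : ℕ, r + y ≠ -m := by
    intro m h
    exact hr (m + y) (by push_cast; linarith)
  have hposterior (y : ℕ) : HasSum (fun z => if y ≤ z then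
      negBinomialMass (r + y) (q * (1 - Θ)) (z - y) else 0) 1 :=
    (hasSum_ite_le_sub_iff y).2 (hasSum_negBinomialMass (hshape y) hp)
  have hthinning : ∑ y ∈ range (x + 1), (bernsteinPolynomial ℝ x y).eval Θ * 1 = 1 := by
    simp only [mul_one, ← Polynomial.eval_finsetSum, bernsteinPolynomial.sum, Polynomial.eval_one]
  have hmixture := hasSum_sum fun y (_ : y ∈ range (x + 1)) =>
    (hposterior y).mul_left ((bernsteinPolynomial ℝ x y).eval Θ)
  rw [hthinning] at hmixture
  simpa only [← pKer_eq_sum_bernstein_mul_negBinomialMass] using hmixture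

/-- For every state x, the transition probabilities sum to one:
    p_Θ defines a valid Markov transition kernel on ℕ. -/
theorem pKer_hasSum_one
    (r q Θ : ℝ) (hr : 0 < r) (hq : q ∈ Set.Ioo (0 : ℝ) 1) (hΘ : Θ ∈ Set.Ioo (0 : ℝ) 1)
    (x : ℕ) :
    HasSum (fun z : ℕ => pKer r q Θ x z) 1 := by
  obtain ⟨hq₀, hq₁⟩ := hq
  obtain ⟨hΘ₀, hΘ₁⟩ := hΘ
  exact pKer_hasSum_one_general (fun m => by linarith [m.cast_nonneg (α := ℝ)])
    (abs_lt.2 ⟨by nlinarith, by nlinarith⟩) x
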